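/- With J_n(y) = Σ_T y^{TotalHeight(T)} over rooted labeled trees on n vertices, for every n ≥ 2 one has J_n'(1) = n! · Σ_{k=0}^{n−2} n^k / k!; that is, the sum of total heights over all rooted labeled trees on n vertices equals n! · Σ_{k=0}^{n−2} n^k / k!. -/

import Mathlib

/-- The type of rooted labeled trees on `n` vertices: a tree on `Fin n` with a root. -/
def RootedLabeledTree (n : ℕ) : Type :=
  {p : SimpleGraph (Fin n) × Fin n // p.1.IsTree}

noncomputable instance (n : ℕ) : Fintype (RootedLabeledTree n) := by
  unfold RootedLabeledTree; exact Fintype.ofFinite _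

/-- The total height of a rooted labeled tree: the sum over all vertices of
the distance to the root. -/
noncomputable def totalHeight {n : ℕ} (T : RootedLabeledTree n) : ℕ :=
  ∑ v : Fin n, T.1.1.dist T.1.2 v

/-- The generating polynomial `J_n(y) = Σ_T y^{TotalHeight(T)}` of rooted labeled
trees on `n` vertices by total height. -/
noncomputable def J (n : ℕ) : Polynomial ℚ :=
  ∑ T : RootedLabeledTree n, Polynomial.X ^ totalHeight T

/-!
Let `R` be a set of `k` out of `n` vertices and `m = n - k`. The pairs of a forest with root set
`R` and a vertex of depth at least `e` in it number `k * m.descFactorial e * n ^ (m - e)`.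
Deleting the roots of a forest leaves a forest on the other `m` vertices whose roots are the `j`
children of the old roots; each of these children had `k` possible parents, and every depth drops
by one. Given the formula for the smaller forests, summing it over all sets of children yields, by
the `e`-th derivative of the binomial theorem, the formula with `e + 1` for the larger ones.

Cayley's formula, the case `e = 0`, needs no separate argument: a forest with root set `R` has
exactly `m` vertices of depth at least one, so the case `e = 1`, which only involves Cayley's
formula for smaller forests, determines the number of forests. Finally, the sum of all depths is
the sum over `e ≥ 1` of the number of pairs with depth at least `e`, and a rooted tree is a forest
with a single root.
-/

open Polynomial in
theorem sum_choose_mul_descFactorial_mul_pow {S : Type*} [CommSemiring S] (a x : S) (n e : ℕ) :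
    ∑ i ∈ Finset.range (n + 1),
        (n.choose i * (n - i).descFactorial e : S) * (a ^ i * x ^ (n - i - e)) =
      n.descFactorial e * (a + x) ^ (n - e) := by
  have expansion : (X + C a) ^ n = ∑ i ∈ Finset.range (n + 1),
      C (n.choose i * a ^ i : S) * X ^ (n - i) := by
    rw [add_comm, add_pow]
    refine Finset.sum_congr rfl fun i _ ↦ ?_
    simp only [C_mul, C_pow, map_natCast]
    ring
  calc
    _ = (derivative^[e] (∑ i ∈ Finset.range (n + 1),
          C (n.choose i * a ^ i : S) * X ^ (n - i))).eval x := by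
      simp only [iterate_derivative_sum, iterate_derivative_C_mul,
        iterate_derivative_X_pow_eq_C_mul, eval_finsetSum, eval_mul, eval_C, eval_pow, eval_X]
      exact Finset.sum_congr rfl fun i _ ↦ by ring
    _ = _ := by
      rw [← expansion, iterate_derivative_X_add_pow]
      simp [add_comm]

theorem sum_choose_mul_mul_descFactorial_mul_pow (k m e : ℕ) :
    ∑ j ∈ Finset.range (m + 1),
        m.choose j * (k ^ j * (j * ((m - j).descFactorial e * m ^ (m - j - e)))) =
      k * (m.descFactorial (e + 1) * (k + m) ^ (m - (e + 1))) := by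
  obtain _ | m := m
  · simp
  have binomial := sum_choose_mul_descFactorial_mul_pow k (m + 1) m e
  rw [Finset.sum_range_succ', Nat.succ_descFactorial_succ, Nat.add_sub_add_right]
  simp only [Nat.cast_id, zero_mul, mul_zero, add_zero, Nat.add_sub_add_right] at binomial ⊢
  calc
    _ = ∑ i ∈ Finset.range (m + 1), k * (m + 1) *
          (m.choose i * (m - i).descFactorial e * (k ^ i * (m + 1) ^ (m - i - e))) := by
      refine Finset.sum_congr rfl fun i _ ↦ ?_
      linear_combination -(k ^ (i + 1) * ((m - i).descFactorial e * (m + 1) ^ (m - i - e)) *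
        (Nat.add_one_mul_choose_eq m i))
    _ = _ := by rw [← Finset.mul_sum, binomial]; ring

lemma sum_eq_sum_card_succ_le {ι : Type*} [Fintype ι] (f : ι → ℕ) {N : ℕ} (hf : ∀ i, f i ≤ N) :
    ∑ i, f i = ∑ e ∈ Finset.range N, Finset.card {i | e + 1 ≤ f i} := by
  simp only [Finset.card_filter]
  rw [Finset.sum_comm]
  refine Finset.sum_congr rfl fun i _ ↦ ?_
  have reached : {e ∈ Finset.range N | e + 1 ≤ f i} = Finset.range (f i) := by
    ext e
    have := hf i
    simp only [Finset.mem_filter, Finset.mem_range]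
    lia
  rw [← Finset.card_filter, reached, Finset.card_range]

lemma exists_adj_dist_eq_dist_add_one {V : Type*} {G : SimpleGraph V} {r v : V}
    (h : G.Reachable r v) (hne : r ≠ v) : ∃ u, G.Adj u v ∧ G.dist r v = G.dist r u + 1 := by
  obtain ⟨p, hp⟩ := h.symm.exists_walk_length_eq_dist
  cases p with
  | nil => exact absurd rfl hne
  | @cons _ u _ hadj p =>
    have dist_le := SimpleGraph.dist_le p
    have dist_adj := hadj.diff_dist_adj (u := r)
    rw [SimpleGraph.Walk.length_cons, SimpleGraph.dist_comm] at hp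
    rw [SimpleGraph.dist_comm] at dist_le
    exact ⟨u, hadj.symm, by lia⟩

universe u

/-- A forest on the vertex set `V` with root set `R`. The depth of a vertex, its distance to the
root of its component, is determined by the parent function; storing it makes that function
acyclic. -/
@[ext]
structure RootedForest {V : Type u} (R : Finset V) where
  parent : {v // v ∉ R} → V
  depth : V → ℕ
  depth_of_mem : ∀ v ∈ R, depth v = 0
  depth_eq_succ : ∀ v : {v // v ∉ R}, depth v = depth (parent v) + 1

namespace RootedForest

variable {V : Type u} {R : Finset V}

lemma depth_eq_zero_iff (F : RootedForest R) {v : V} : F.depth v = 0 ↔ v ∈ R := by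
  refine ⟨fun h ↦ by_contra fun hv ↦ ?_, F.depth_of_mem v⟩
  have := F.depth_eq_succ ⟨v, hv⟩
  lia

theorem parent_injective : Function.Injective (parent : RootedForest R → _) := by
  intro F G h
  suffices ∀ n v, F.depth v = n → G.depth v = n from
    RootedForest.ext h (funext fun v ↦ (this _ v rfl).symm)
  intro n
  induction n with
  | zero => exact fun v hv ↦ G.depth_of_mem v (F.depth_eq_zero_iff.1 hv)
  | succ n ih =>
    intro v hv
    have hvR : v ∉ R := fun h ↦ by simp [F.depth_of_mem v h] at hv
    have hF := F.depth_eq_succ ⟨v, hvR⟩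
    have hG := G.depth_eq_succ ⟨v, hvR⟩
    rw [← h, ih (F.parent ⟨v, hvR⟩) (by lia)] at hG
    exact hG

theorem nonempty_roots [Nonempty V] (F : RootedForest R) : R.Nonempty := by
  refine ⟨Function.argmin F.depth, by_contra fun h ↦ ?_⟩
  have := F.depth_eq_succ ⟨_, h⟩
  have := Function.argmin_le F.depth (F.parent ⟨_, h⟩)
  lia

instance [Finite V] : Finite (RootedForest R) :=
  Finite.of_injective parent parent_injective

noncomputable instance [Finite V] : Fintype (RootedForest R) :=
  Fintype.ofFinite _

/-! ### Peeling off the roots -/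

section Layers

variable [DecidableEq V]

/-- The forest obtained from a forest on the complement of `R`, with root set `A`, by attaching
each `a ∈ A` as a child of the new root `g a ∈ R`. -/
def graft {A : Finset {v // v ∉ R}} (g : A → R) (F : RootedForest A) : RootedForest R where
  parent v := if h : v ∈ A then g ⟨v, h⟩ else F.parent ⟨v, h⟩
  depth v := if h : v ∈ R then 0 else F.depth ⟨v, h⟩ + 1
  depth_of_mem v hv := by simp only [hv, dite_true]
  depth_eq_succ v := by
    by_cases hA : v ∈ A
    · simp [hA, v.2, (g ⟨v, hA⟩).2, F.depth_of_mem v hA]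
    · simp [hA, v.2, (F.parent ⟨v, hA⟩).2, F.depth_eq_succ ⟨v, hA⟩]

/-- The children of the roots of a forest. -/
def rootChildren [Fintype V] (F : RootedForest R) : Finset {v // v ∉ R} := {v | F.parent v ∈ R}

variable [Fintype V]

lemma mem_rootChildren {F : RootedForest R} {v : {v // v ∉ R}} :
    v ∈ F.rootChildren ↔ F.parent v ∈ R := by
  simp [rootChildren]

lemma rootChildren_graft {A : Finset {v // v ∉ R}} (g : A → R) (F : RootedForest A) :
    (graft g F).rootChildren = A := by
  ext v
  by_cases hA : v ∈ A
  · simp [mem_rootChildren, graft, hA]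
  · simp [mem_rootChildren, graft, hA, (F.parent ⟨v, hA⟩).2]

lemma mem_iff_of_rootChildren_eq {F : RootedForest R} {A : Finset {v // v ∉ R}}
    (hA : F.rootChildren = A) (v : {v // v ∉ R}) : v ∈ A ↔ F.parent v ∈ R := by
  rw [← hA, mem_rootChildren]

/-- The forest induced on the non-roots, whose root set `A` consists of the children of the old
roots. -/
def prune (F : RootedForest R) {A : Finset {v // v ∉ R}} (hA : F.rootChildren = A) :
    RootedForest A where
  parent v := ⟨F.parent v, (mem_iff_of_rootChildren_eq hA v).not.1 v.2⟩
  depth v := F.depth v - 1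
  depth_of_mem v hv := by
    rw [F.depth_eq_succ v, F.depth_of_mem _ ((mem_iff_of_rootChildren_eq hA v).1 hv)]
  depth_eq_succ v := by
    have hv := F.depth_eq_succ v
    have hp := F.depth_eq_succ ⟨F.parent v, (mem_iff_of_rootChildren_eq hA v).not.1 v.2⟩
    lia

/-- Forests in which `A` is the set of children of the roots amount to an assignment of a root to
each element of `A`, together with the forest with root set `A` left after deleting the roots. -/
def graftEquiv (A : Finset {v // v ∉ R}) :
    (A → R) × RootedForest A ≃ {F : RootedForest R // F.rootChildren = A} where
  toFun p := ⟨graft p.1 p.2, rootChildren_graft p.1 p.2⟩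
  invFun F := (fun a ↦ ⟨F.1.parent a, (mem_iff_of_rootChildren_eq F.2 a).1 a.2⟩, F.1.prune F.2)
  left_inv p := Prod.ext (funext fun a ↦ by simp [graft])
    (parent_injective (funext fun v ↦ by simp [graft, prune, v.2]))
  right_inv F := Subtype.ext (parent_injective (funext fun v ↦ by simp [graft, prune]))

theorem sum_eq_sum_graft {M : Type*} [AddCommMonoid M] (f : RootedForest R → M) :
    ∑ F, f F = ∑ A : Finset {v // v ∉ R}, ∑ p : (A → R) × RootedForest A, f (graft p.1 p.2) := by
  rw [← Fintype.sum_fiberwise rootChildren f]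
  exact Finset.sum_congr rfl fun A _ ↦ ((graftEquiv A).sum_comp fun F ↦ f F.1).symm

end Layers

/-! ### Counting vertices of large depth -/

section DeepPairs

variable [Fintype V]

/-- The number of pairs of a forest with root set `R` and a vertex of depth at least `e` in it. -/
noncomputable def deepPairs (R : Finset V) (e : ℕ) : ℕ :=
  ∑ F : RootedForest R, Finset.card {v | e ≤ F.depth v}

lemma card_succ_le_depth_graft [DecidableEq V] {A : Finset {v // v ∉ R}} (g : A → R)
    (F : RootedForest A) (e : ℕ) :
    Finset.card {v | e + 1 ≤ (graft g F).depth v} = Finset.card {v | e ≤ F.depth v} := by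
  rw [← Finset.card_map (Function.Embedding.subtype (· ∉ R))]
  congr 1
  ext v
  by_cases hv : v ∈ R <;> simp [graft, hv]

theorem deepPairs_succ [DecidableEq V] (R : Finset V) (e : ℕ) :
    deepPairs R (e + 1) =
      ∑ A : Finset {v // v ∉ R}, R.card ^ A.card * deepPairs A e := by
  rw [deepPairs, sum_eq_sum_graft]
  refine Finset.sum_congr rfl fun A _ ↦ ?_
  simp only [card_succ_le_depth_graft, Fintype.sum_prod_type, Finset.sum_const, Finset.card_univ,
    Fintype.card_fun, Fintype.card_coe, smul_eq_mul, deepPairs]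

lemma deepPairs_zero (R : Finset V) :
    deepPairs R 0 = Fintype.card (RootedForest R) * Fintype.card V := by
  simp [deepPairs]

lemma deepPairs_one (R : Finset V) :
    deepPairs R 1 = Fintype.card (RootedForest R) * (Fintype.card V - R.card) := by
  have card_nonroots (F : RootedForest R) :
      Finset.card {v | 1 ≤ F.depth v} = Fintype.card V - R.card := by
    classical
    rw [← Finset.card_compl]
    congr 1
    ext v
    simp [Nat.one_le_iff_ne_zero, F.depth_eq_zero_iff]
  simp [deepPairs, card_nonroots]

lemma deepPairs_succ_eq_of_forall [DecidableEq V] (R : Finset V) (e : ℕ)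
    (h : ∀ A : Finset {v // v ∉ R}, deepPairs A e =
      A.card * ((Fintype.card {v // v ∉ R} - A.card).descFactorial e *
        Fintype.card {v // v ∉ R} ^ (Fintype.card {v // v ∉ R} - A.card - e))) :
    deepPairs R (e + 1) = R.card * ((Fintype.card V - R.card).descFactorial (e + 1) *
      Fintype.card V ^ (Fintype.card V - R.card - (e + 1))) := by
  have card_compl : Fintype.card {v // v ∉ R} = Fintype.card V - R.card := by simp
  have card_add : R.card + (Fintype.card V - R.card) = Fintype.card V :=
    Nat.add_sub_cancel' R.card_le_univ
  set m := Fintype.card V - R.card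
  have binomial := sum_choose_mul_mul_descFactorial_mul_pow R.card m e
  rw [card_add] at binomial
  simp only [deepPairs_succ, h, card_compl]
  rw [← binomial, ← Finset.powerset_univ, Finset.sum_powerset_apply_card fun j ↦
    R.card ^ j * (j * ((m - j).descFactorial e * m ^ (m - j - e))), Finset.card_univ, card_compl]
  simp only [smul_eq_mul]

lemma deepPairs_empty (e : ℕ) : deepPairs (∅ : Finset V) e = 0 := by
  refine Finset.sum_eq_zero fun F _ ↦ Finset.card_eq_zero.2 (Finset.filter_eq_empty_iff.2 ?_)
  intro v _
  have : Nonempty V := ⟨v⟩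
  exact absurd F.nonempty_roots Finset.not_nonempty_empty

lemma card_univ : Fintype.card (RootedForest (Finset.univ : Finset V)) = 1 := by
  have : IsEmpty {v : V // v ∉ Finset.univ} := ⟨fun v ↦ v.2 (Finset.mem_univ _)⟩
  refine Fintype.card_eq_one_iff.2 ⟨⟨isEmptyElim, 0, fun _ _ ↦ rfl, isEmptyElim⟩, fun F ↦ ?_⟩
  exact parent_injective (Subsingleton.elim _ _)

lemma deepPairs_zero_eq (R : Finset V) :
    deepPairs R 0 = R.card * Fintype.card V ^ (Fintype.card V - R.card) := by
  classical
  induction hn : Fintype.card V using Nat.strong_induction_on generalizing V with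
  | _ n ih =>
    subst hn
    obtain rfl | hR := R.eq_empty_or_nonempty
    · simp [deepPairs_empty]
    have card_lt : Fintype.card {v // v ∉ R} < Fintype.card V :=
      hR.elim fun v hv ↦ Fintype.card_subtype_lt (x := v) (not_not.2 hv)
    have one_eq := deepPairs_succ_eq_of_forall R 0 fun A ↦ by simpa using ih _ card_lt A rfl
    rw [deepPairs_one, Nat.descFactorial_one] at one_eq
    rw [deepPairs_zero]
    obtain hm | hm := Nat.eq_zero_or_pos (Fintype.card V - R.card)
    · obtain rfl : R = Finset.univ := (Finset.card_eq_iff_eq_univ R).1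
        (le_antisymm R.card_le_univ (Nat.sub_eq_zero_iff_le.1 hm))
      simp [card_univ]
    · refine Nat.eq_of_mul_eq_mul_right hm ?_
      calc
        _ = Fintype.card (RootedForest R) * (Fintype.card V - R.card) * Fintype.card V := by ring
        _ = _ := by
          rw [one_eq, ← Nat.sub_add_cancel hm]
          simp only [Nat.add_sub_cancel]
          ring

theorem deepPairs_eq (R : Finset V) (e : ℕ) :
    deepPairs R e = R.card * ((Fintype.card V - R.card).descFactorial e *
      Fintype.card V ^ (Fintype.card V - R.card - e)) := by
  classical
  induction e generalizing V with
  | zero => simpa using deepPairs_zero_eq R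
  | succ e ih => exact deepPairs_succ_eq_of_forall R e fun A ↦ ih A

theorem depth_le (F : RootedForest R) (v : V) : F.depth v ≤ Fintype.card V - R.card := by
  have no_deeper : deepPairs R (Fintype.card V - R.card + 1) = 0 := by
    -- The falling factorial `m.descFactorial (m + 1)` vanishes.
    simp [deepPairs_eq]
  have empty := Finset.card_eq_zero.1 (Finset.sum_eq_zero_iff.1 no_deeper F (Finset.mem_univ F))
  have := Finset.filter_eq_empty_iff.1 empty (Finset.mem_univ v)
  lia

theorem sum_sum_depth (R : Finset V) :
    ∑ F : RootedForest R, ∑ v, F.depth v =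
      ∑ e ∈ Finset.range (Fintype.card V - R.card), deepPairs R (e + 1) := by
  calc
    _ = ∑ F : RootedForest R, ∑ e ∈ Finset.range (Fintype.card V - R.card),
          Finset.card {v | e + 1 ≤ F.depth v} :=
      Finset.sum_congr rfl fun F _ ↦ sum_eq_sum_card_succ_le F.depth F.depth_le
    _ = _ := Finset.sum_comm

end DeepPairs

/-! ### Trees as forests with one root -/

section Graph

/-- The graph joining each non-root of a forest to its parent. -/
def toGraph (F : RootedForest R) : SimpleGraph V :=
  SimpleGraph.fromRel fun u v ↦ ∃ h : u ∉ R, F.parent ⟨u, h⟩ = v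

lemma depth_eq_of_parent_eq (F : RootedForest R) {u v : V} (h : u ∉ R)
    (huv : F.parent ⟨u, h⟩ = v) : F.depth u = F.depth v + 1 :=
  huv ▸ F.depth_eq_succ ⟨u, h⟩

lemma toGraph_adj (F : RootedForest R) {u v : V} :
    F.toGraph.Adj u v ↔
      (∃ h : u ∉ R, F.parent ⟨u, h⟩ = v) ∨ ∃ h : v ∉ R, F.parent ⟨v, h⟩ = u := by
  refine SimpleGraph.fromRel_adj _ _ _ |>.trans ⟨And.right, fun h ↦ ⟨?_, h⟩⟩
  rintro rfl
  obtain ⟨hu, h⟩ | ⟨hu, h⟩ := h <;> have := F.depth_eq_of_parent_eq hu h <;> lia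

lemma adj_parent (F : RootedForest R) (v : {v // v ∉ R}) : F.toGraph.Adj (F.parent v) v :=
  F.toGraph_adj.2 (.inr ⟨v.2, rfl⟩)

lemma parent_eq_of_adj (F : RootedForest R) {u : V} {v : {v // v ∉ R}}
    (h : F.toGraph.Adj u v) (hd : F.depth u < F.depth v) : F.parent v = u := by
  obtain ⟨hu, h⟩ | ⟨_, h⟩ := F.toGraph_adj.1 h
  · have := F.depth_eq_of_parent_eq hu h
    lia
  · exact h

lemma depth_le_depth_add_length (F : RootedForest R) {u v : V} (p : F.toGraph.Walk u v) :
    F.depth v ≤ F.depth u + p.length := by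
  induction p with
  | nil => simp
  | cons h p ih =>
    rw [SimpleGraph.Walk.length_cons]
    obtain ⟨hu, h⟩ | ⟨hu, h⟩ := F.toGraph_adj.1 h <;>
      have := F.depth_eq_of_parent_eq hu h <;> lia

lemma exists_walk_length_eq_depth (F : RootedForest R) (v : V) :
    ∃ r ∈ R, ∃ p : F.toGraph.Walk r v, p.length = F.depth v := by
  induction hn : F.depth v generalizing v with
  | zero => exact ⟨v, F.depth_eq_zero_iff.1 hn, .nil, rfl⟩
  | succ n ih =>
    have hv : v ∉ R := fun h ↦ by simp [F.depth_of_mem v h] at hn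
    obtain ⟨r, hr, p, hp⟩ := ih (F.parent ⟨v, hv⟩) (by have := F.depth_eq_succ ⟨v, hv⟩; lia)
    exact ⟨r, hr, p.concat (F.adj_parent ⟨v, hv⟩), by simp [hp]⟩

lemma card_edgeSet_toGraph_le [Finite V] (F : RootedForest R) :
    Nat.card F.toGraph.edgeSet ≤ Nat.card {v // v ∉ R} := by
  have subset_range : F.toGraph.edgeSet ⊆ Set.range fun v : {v // v ∉ R} ↦ s(v.1, F.parent v) := by
    intro e he
    induction e with
    | _ u v =>
      obtain ⟨hu, rfl⟩ | ⟨hv, rfl⟩ := (F.toGraph_adj (u := u) (v := v)).1 he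
      · exact ⟨⟨u, hu⟩, rfl⟩
      · exact ⟨⟨v, hv⟩, Sym2.eq_swap⟩
  exact (Nat.card_mono (Set.finite_range _) subset_range).trans (Finite.card_range_le _)

end Graph

section SingleRoot

variable {r : V}

lemma exists_walk_root_length_eq_depth (F : RootedForest {r}) (v : V) :
    ∃ p : F.toGraph.Walk r v, p.length = F.depth v := by
  simpa using F.exists_walk_length_eq_depth v

lemma connected_toGraph (F : RootedForest {r}) : F.toGraph.Connected :=
  (SimpleGraph.connected_iff_exists_forall_reachable _).2
    ⟨r, fun v ↦ (F.exists_walk_root_length_eq_depth v).choose.reachable⟩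

theorem dist_toGraph (F : RootedForest {r}) (v : V) : F.toGraph.dist r v = F.depth v := by
  apply le_antisymm
  · obtain ⟨p, hp⟩ := F.exists_walk_root_length_eq_depth v
    exact hp ▸ SimpleGraph.dist_le p
  · obtain ⟨p, hp⟩ := F.connected_toGraph.exists_walk_length_eq_dist r v
    simpa [← hp, F.depth_of_mem r] using F.depth_le_depth_add_length p

theorem isTree_toGraph [Finite V] (F : RootedForest {r}) : F.toGraph.IsTree := by
  refine SimpleGraph.isTree_iff_connected_and_card.2 ⟨F.connected_toGraph, le_antisymm ?_
    F.connected_toGraph.card_vert_le_card_edgeSet_add_one⟩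
  classical
  have := Fintype.ofFinite V
  have card_nonroots : Nat.card {v // v ∉ ({r} : Finset V)} + 1 = Nat.card V := by
    have : 0 < Fintype.card V := Fintype.card_pos_iff.2 ⟨r⟩
    simp
    lia
  exact card_nonroots ▸ Nat.add_le_add_right F.card_edgeSet_toGraph_le 1

theorem toGraph_injective :
    Function.Injective (toGraph : RootedForest {r} → SimpleGraph V) := by
  intro F G h
  have depth_eq (v : V) : F.depth v = G.depth v := by rw [← dist_toGraph, ← dist_toGraph, h]
  refine parent_injective (funext fun v ↦ (G.parent_eq_of_adj (h ▸ F.adj_parent v) ?_).symm)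
  rw [← depth_eq, ← depth_eq, F.depth_eq_succ v]
  exact Nat.lt_succ_self _

theorem exists_toGraph_eq {G : SimpleGraph V} (hG : G.IsTree) (r : V) :
    ∃ F : RootedForest {r}, F.toGraph = G := by
  have exists_parent (v : {v // v ∉ ({r} : Finset V)}) :
      ∃ u, G.Adj u v ∧ G.dist r v = G.dist r u + 1 :=
    exists_adj_dist_eq_dist_add_one (hG.connected r v) (by simpa [eq_comm] using v.2)
  choose parent adj_parent dist_parent using exists_parent
  let F : RootedForest {r} := ⟨parent, G.dist r, by simp, dist_parent⟩
  have le : F.toGraph ≤ G := by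
    intro u v h
    obtain ⟨hu, rfl⟩ | ⟨hv, rfl⟩ := F.toGraph_adj.1 h
    · exact (adj_parent ⟨u, hu⟩).symm
    · exact adj_parent ⟨v, hv⟩
  exact ⟨F, le_antisymm le
    ((SimpleGraph.isTree_iff_minimal_connected.1 hG).2 F.connected_toGraph le)⟩

end SingleRoot

end RootedForest

/-- A rooted labeled tree amounts to its root `r` and a forest with root set `{r}`. -/
noncomputable def sigmaRootedForestEquiv (n : ℕ) :
    (Σ r : Fin n, RootedForest {r}) ≃ RootedLabeledTree n :=
  Equiv.ofBijective (fun F ↦ ⟨(F.2.toGraph, F.1), F.2.isTree_toGraph⟩) <| by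
    constructor
    · rintro ⟨r, F⟩ ⟨s, G⟩ h
      obtain rfl : r = s := congrArg (·.1.2) h
      have graph_eq : F.toGraph = G.toGraph := congrArg (·.1.1) h
      rw [RootedForest.toGraph_injective graph_eq]
    · rintro ⟨⟨G, r⟩, hG⟩
      obtain ⟨F, rfl⟩ := RootedForest.exists_toGraph_eq hG r
      exact ⟨⟨r, F⟩, rfl⟩

lemma totalHeight_sigmaRootedForestEquiv {n : ℕ} (F : Σ r : Fin n, RootedForest {r}) :
    totalHeight (sigmaRootedForestEquiv n F) = ∑ v, F.2.depth v :=
  Finset.sum_congr rfl fun v _ ↦ F.2.dist_toGraph v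

theorem sum_totalHeight (n : ℕ) :
    ∑ T : RootedLabeledTree n, totalHeight T =
      n * ∑ e ∈ Finset.range (n - 1), (n - 1).descFactorial (e + 1) * n ^ (n - 1 - (e + 1)) := by
  rw [← (sigmaRootedForestEquiv n).sum_comp, Fintype.sum_sigma]
  simp [totalHeight_sigmaRootedForestEquiv, RootedForest.sum_sum_depth, RootedForest.deepPairs_eq]

lemma derivative_J_eval_one (n : ℕ) :
    (Polynomial.derivative (J n)).eval 1 = ∑ T : RootedLabeledTree n, (totalHeight T : ℚ) := by
  simp [J, Polynomial.eval_finsetSum, Polynomial.derivative_X_pow]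

lemma natCast_descFactorial_sub {K : Type*} [DivisionRing K] [CharZero K] {m k : ℕ}
    (h : k ≤ m) : (m.descFactorial (m - k) : K) = m.factorial / k.factorial := by
  rw [eq_div_iff (Nat.cast_ne_zero.2 k.factorial_ne_zero), ← Nat.cast_mul, mul_comm]
  exact_mod_cast Nat.sub_sub_self h ▸ Nat.factorial_mul_descFactorial (Nat.sub_le m k)

/-- `J_n'(1) = n! · Σ_{k=0}^{n−2} n^k/k!` for `n ≥ 2`: the sum of total heights over
all rooted labeled trees on `n` vertices equals `n! · Σ_{k=0}^{n−2} n^k/k!`. -/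
theorem J_deriv_eval_one (n : ℕ) (hn : 2 ≤ n) :
    (Polynomial.derivative (J n)).eval 1 =
      (n.factorial : ℚ) * ∑ k ∈ Finset.range (n - 1), (n : ℚ) ^ k / (k.factorial : ℚ) := by
  have term_eq (k : ℕ) (hk : k ∈ Finset.range (n - 1)) :
      (n * ((n - 1).descFactorial (n - 1 - 1 - k + 1) *
        n ^ (n - 1 - (n - 1 - 1 - k + 1))) : ℚ) = n.factorial * (n ^ k / k.factorial) := by
    have hk := Finset.mem_range.1 hk
    have reflect : n - 1 - 1 - k + 1 = n - 1 - k := by lia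
    rw [reflect, Nat.sub_sub_self hk.le, natCast_descFactorial_sub hk.le,
      ← Nat.mul_factorial_pred (by lia : n ≠ 0)]
    push_cast
    ring
  rw [derivative_J_eval_one, ← Nat.cast_sum, sum_totalHeight, ← Finset.sum_range_reflect]
  push_cast
  rw [Finset.mul_sum, Finset.mul_sum]
  exact Finset.sum_congr rfl term_eq
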